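/- Let Ω ⊂ ℂⁿ (n ≥ 2) be a bounded domain, U ⊆ ℂⁿ an open set such that Ω ∩ U is log-type convex, and ξ ∈ ∂Ω ∩ U. Fix κ ≥ 0. For any ε > 0 with B_ε(ξ) ⊆ U, there exist δ > 0 and C > 0 with the following property: for any p, q ∈ Ω ∩ B_δ(ξ) such that there exists a (1,κ)-almost geodesic σ : [a,b] → Ω (for the Kobayashi distance K_Ω) with σ(a) = p and σ(b) = q, there exists a C-rough geodesic σ̃ : [a,b] → Ω joining p and q whose image is contained in B_ε(ξ). -/

import Mathlib

open Metric Set MeasureTheory Filter Topology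

noncomputable section

variable {E : Type*} [NormedAddCommGroup E] [NormedSpace ℂ E]

/-- Distance from `x` to the boundary of `D`. -/
def bdist (D : Set E) (x : E) : ℝ := Metric.infDist x (frontier D)

/-- Distance from `x` to the boundary of `D` along the complex line `x + ℂ v`. -/
def bdistDir (D : Set E) (x v : E) : ℝ :=
  Metric.infDist x (frontier D ∩ {w | ∃ c : ℂ, w = x + c • v})

/-- The infinitesimal Kobayashi (pseudo-)metric of `D ⊆ E`. -/
def kobMetric (D : Set E) (x v : E) : ℝ :=
  sInf { r : ℝ | ∃ (f : ℂ → E) (ξ : ℂ),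
    DifferentiableOn ℂ f (ball (0:ℂ) 1) ∧ MapsTo f (ball (0:ℂ) 1) D ∧
    f 0 = x ∧ ξ • derivWithin f (ball (0:ℂ) 1) 0 = v ∧ r = ‖ξ‖ }

/-- `σ` is absolutely continuous on `[a,b]`, with a.e. derivative `g`. -/
def IsACWithDeriv (σ g : ℝ → E) (a b : ℝ) : Prop :=
  IntervalIntegrable g volume a b ∧
  ∀ t ∈ Icc a b, σ t = σ a + ∫ s in a..t, g s

/-- The Kobayashi pseudo-distance of `D`, defined via lengths of absolutely
continuous curves (Venturini's description). -/
def kobDist (D : Set E) (x y : E) : ℝ :=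
  sInf { r : ℝ | ∃ (a b : ℝ) (σ g : ℝ → E), a ≤ b ∧
    IsACWithDeriv σ g a b ∧ MapsTo σ (Icc a b) D ∧ σ a = x ∧ σ b = y ∧
    r = ∫ t in a..b, kobMetric D (σ t) (g t) }

/-- Log-type convex domain, with explicit constants `C, ν > 0`. -/
def LogTypeConvexWith (D : Set E) (C ν : ℝ) : Prop :=
  IsOpen D ∧ D.Nonempty ∧ Bornology.IsBounded D ∧ Convex ℝ D ∧ 0 < C ∧ 0 < ν ∧
  ∀ z ∈ D, ∀ v : E, v ≠ 0 →
    bdistDir D z v ≤ C / |Real.log (bdist D z)| ^ (1 + ν)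

/-- Log-type convex domain. -/
def LogTypeConvex (D : Set E) : Prop := ∃ C ν : ℝ, LogTypeConvexWith D C ν

/-- A `ℂ`-convex set: every nonempty intersection with a complex affine line is
connected and simply connected. -/
def CConvex (D : Set E) : Prop :=
  ∀ z v : E, v ≠ 0 → (D ∩ {w | ∃ c : ℂ, w = z + c • v}).Nonempty →
    IsConnected (D ∩ {w | ∃ c : ℂ, w = z + c • v}) ∧
    SimplyConnectedSpace ↥(D ∩ {w | ∃ c : ℂ, w = z + c • v})

/-- Log-type `ℂ`-convex domain. -/
def LogTypeCConvex (D : Set E) : Prop :=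
  IsOpen D ∧ D.Nonempty ∧ Bornology.IsBounded D ∧ CConvex D ∧
  ∃ C ν : ℝ, 0 < C ∧ 0 < ν ∧
    ∀ z ∈ D, ∀ v : E, v ≠ 0 →
      bdistDir D z v ≤ C / |Real.log (bdist D z)| ^ (1 + ν)

/-- `σ : [a,b] → D` (with a.e. derivative `g`) is a `(λ,κ)`-almost geodesic for the
Kobayashi distance of `D`. -/
def AlmostGeodesicOn (D : Set E) (lam kap : ℝ) (σ g : ℝ → E) (a b : ℝ) : Prop :=
  MapsTo σ (Icc a b) D ∧ IsACWithDeriv σ g a b ∧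
  (∀ s ∈ Icc a b, ∀ t ∈ Icc a b,
    (1 / lam) * |t - s| - kap ≤ kobDist D (σ s) (σ t) ∧
    kobDist D (σ s) (σ t) ≤ lam * |t - s| + kap) ∧
  (∀ᵐ t ∂volume, t ∈ Icc a b → kobMetric D (σ t) (g t) ≤ lam)

/-- `σ : [a,b] → D` is a `C`-rough geodesic for the Kobayashi distance of `D`. -/
def RoughGeodesicOn (D : Set E) (C : ℝ) (σ : ℝ → E) (a b : ℝ) : Prop :=
  MapsTo σ (Icc a b) D ∧
  ∀ s ∈ Icc a b, ∀ t ∈ Icc a b,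
    |t - s| - C ≤ kobDist D (σ s) (σ t) ∧ kobDist D (σ s) (σ t) ≤ |t - s| + C

/-- `ρ` is a `C¹` local defining function for `D` near `ξ` on the open set `W`. -/
def IsLocalDefiningFn (D : Set E) (ξ : E) (W : Set E) (ρ : E → ℝ) : Prop :=
  IsOpen W ∧ ξ ∈ W ∧ ContDiffOn ℝ 1 ρ W ∧ (∀ x ∈ W, fderiv ℝ ρ x ≠ 0) ∧
  D ∩ W = {x ∈ W | ρ x < 0} ∧ frontier D ∩ W = {x ∈ W | ρ x = 0}

/-- `ξ` is a Dini-smooth boundary point of `D`: the boundary is `C¹` near `ξ` and the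
unit normal admits a modulus of continuity `ω` satisfying the Dini condition. -/
def DiniSmoothBoundaryPoint (D : Set E) (ξ : E) : Prop :=
  ∃ (W : Set E) (ρ : E → ℝ) (ω : ℝ → ℝ),
    IsLocalDefiningFn D ξ W ρ ∧
    (∀ t ∈ Icc (0:ℝ) 1, 0 ≤ ω t) ∧ MonotoneOn ω (Icc (0:ℝ) 1) ∧
    IntegrableOn (fun t => ω t / t) (Ioc (0:ℝ) 1) ∧
    ∀ x ∈ frontier D ∩ W, ∀ y ∈ frontier D ∩ W, ‖x - y‖ ≤ 1 →
      ‖(‖fderiv ℝ ρ x‖)⁻¹ • fderiv ℝ ρ x - (‖fderiv ℝ ρ y‖)⁻¹ • fderiv ℝ ρ y‖ ≤ ω ‖x - y‖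

/-- `D` has `C^{1,ε}` boundary: near every boundary point there is a `C¹` defining
function whose differential is `ε`-Hölder. -/
def HolderC1Boundary (D : Set E) (ε : ℝ) : Prop :=
  ∀ ξ ∈ frontier D, ∃ (W : Set E) (ρ : E → ℝ) (M : ℝ), 0 < M ∧
    IsLocalDefiningFn D ξ W ρ ∧
    ∀ x ∈ W, ∀ y ∈ W, ‖fderiv ℝ ρ x - fderiv ℝ ρ y‖ ≤ M * ‖x - y‖ ^ ε

/-- The complex affine tangent hyperplane of `∂D` at `x`, computed from a local
defining function `ρ`. -/
def complexTangentHyperplane (ρ : E → ℝ) (x : E) : Set E :=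
  {w : E | fderiv ℝ ρ x (w - x) = 0 ∧ fderiv ℝ ρ x ((Complex.I : ℂ) • (w - x)) = 0}

/-- The Gromov product of `x` and `y` with respect to the base point `o`, for the
Kobayashi distance of `D`. -/
def gromovProd (D : Set E) (o x y : E) : ℝ :=
  (kobDist D x o + kobDist D o y - kobDist D x y) / 2

end

/-!
At every boundary point, a convex set lies in a half-space. Applied to a holomorphic disc, the
Schwarz lemma turns this into `‖v‖ ≤ 2 δ_D(z; v) k_D(z; v)`. Rescaling discs shows that `k_Ω`
and `k_{Ω ∩ U}` are comparable near `ξ`. With the log-type condition, a curve of bounded Kobayashi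
speed which is at distance `d` from the boundary therefore has Euclidean speed
`O(|log d| ^ -(1 + ν))`.

Along an almost geodesic staying near `ξ`, let `u` be a time at which the distance to the boundary
is largest. The bound `K_Ω(x, y) ≤ A + B log (1 / m)`, for points `x, y` at distance at least `m`
from the boundary, yields `|log d(t)| ≳ |t - u|`. As `(L + |t - u|) ^ -(1 + ν)` is integrable with
small integral for `L` large, an almost geodesic that moves by a definite amount near `ξ` must
reach points of `Ω ∩ U` at a fixed distance from the boundary.

If `σ` leaves a small ball around `ξ`, it reaches such points both before leaving the ball for
the first time and after its last return. Two such points are at bounded Kobayashi distance, so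
the stretch of `σ` between them lasts a bounded time and may be replaced by a constant.
-/

section Boundary

variable {E : Type*} [NormedAddCommGroup E] [NormedSpace ℂ E] {D : Set E} {z v : E}

lemma frontier_inter_complexLine_nonempty (hDb : Bornology.IsBounded D) (hz : z ∈ D) (hv : v ≠ 0) :
    (frontier D ∩ {w | ∃ c : ℂ, w = z + c • v}).Nonempty := by
  let φ : ℂ → E := fun c => z + c • v
  have hφ : Differentiable ℂ φ := by fun_prop
  have hne : φ ⁻¹' D ≠ univ := fun huniv => by
    have hrange : range φ ⊆ D := range_subset_iff.2 fun c => huniv.symm.subset (mem_univ c)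
    exact hv (by simpa [φ] using hφ.apply_eq_apply_of_bounded (hDb.subset hrange) 1 0)
  obtain ⟨c, hc⟩ := nonempty_frontier_iff.2 ⟨⟨0, by simpa [φ] using hz⟩, hne⟩
  exact ⟨φ c, hφ.continuous.frontier_preimage_subset D hc, c, rfl⟩

lemma bdist_pos [Nontrivial E] (hDo : IsOpen D) (hDb : Bornology.IsBounded D) (hz : z ∈ D) :
    0 < bdist D z := by
  obtain ⟨v, hv⟩ := exists_ne (0 : E)
  have hne : (frontier D).Nonempty :=
    (frontier_inter_complexLine_nonempty hDb hz hv).mono inter_subset_left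
  exact (isClosed_frontier.notMem_iff_infDist_pos hne).1 fun h =>
    (hDo.frontier_eq ▸ h).2 hz

lemma ball_subset_of_le_bdist (hDo : IsOpen D) (hz : z ∈ D) {m : ℝ} (hm : m ≤ bdist D z) :
    ball z m ⊆ D := by
  rcases le_or_gt m 0 with h0 | h0
  · rw [ball_eq_empty.2 h0]
    exact empty_subset D
  have hcover : ball z m ⊆ D ∪ (closure D)ᶜ := by
    intro w hw
    by_contra hnot
    have hwf : w ∈ frontier D := by
      rw [hDo.frontier_eq]
      exact ⟨not_not.1 fun h => hnot (Or.inr h), fun h => hnot (Or.inl h)⟩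
    exact (Metric.infDist_le_dist_of_mem hwf).not_gt ((mem_ball'.1 hw).trans_le hm)
  exact (convex_ball z m).isPreconnected.subset_left_of_subset_union hDo
    isClosed_closure.isOpen_compl (disjoint_compl_right.mono_left subset_closure) hcover
    ⟨z, mem_ball_self h0, hz⟩

end Boundary

section HalfPlane

lemma mul_norm_deriv_le_of_re_neg {h : ℂ → ℂ} {c : ℂ} {r : ℝ} (hr : 0 < r)
    (hd : DifferentiableOn ℂ h (ball c r)) (hneg : ∀ z ∈ ball c r, (h z).re < 0) :
    r * ‖deriv h c‖ ≤ 2 * ‖h c‖ := by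
  have hc : c ∈ ball c r := mem_ball_self hr
  set w := h c with hw
  have hden : ∀ z ∈ ball c r, h z + star w ≠ 0 := fun z hz heq => by
    have hre : (h z).re + w.re = 0 := by simpa using congrArg Complex.re heq
    linarith [hneg z hz, hneg c hc]
  -- The Cayley transform taking the half-plane to the unit disc and `w` to `0`.
  let φ : ℂ → ℂ := fun z => (h z - w) / (h z + star w)
  have hφc : φ c = 0 := by simp [φ, hw]
  have hφd : DifferentiableOn ℂ φ (ball c r) := (hd.sub_const _).div (hd.add_const _) hden
  have hφmaps : MapsTo φ (ball c r) (closedBall (φ c) 1) := by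
    intro z hz
    rw [hφc, mem_closedBall_zero_iff, norm_div]
    refine div_le_one_of_le₀ ?_ (norm_nonneg _)
    rw [← sq_le_sq₀ (norm_nonneg _) (norm_nonneg _), Complex.sq_norm, Complex.sq_norm,
      Complex.normSq_apply, Complex.normSq_apply]
    simp only [Complex.sub_re, Complex.sub_im, Complex.add_re, Complex.add_im, Complex.star_def,
      Complex.conj_re, Complex.conj_im]
    nlinarith [mul_pos_of_neg_of_neg (hneg z hz) (hneg c hc)]
  have hφ' : deriv φ c = deriv h c / (w + star w) := by
    have hdh : HasDerivAt h (deriv h c) c :=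
      (hd.differentiableAt (isOpen_ball.mem_nhds hc)).hasDerivAt
    refine ((hdh.sub_const w).div (hdh.add_const (star w)) (hden c hc)).deriv.trans ?_
    have hne := hden c hc
    rw [← hw] at hne ⊢
    field_simp
    ring
  have hschwarz := Complex.norm_deriv_le_div_of_mapsTo_ball hφd hφmaps hr
  rw [hφ', norm_div, div_le_div_iff₀ (norm_pos_iff.2 (hden c hc)) hr] at hschwarz
  calc r * ‖deriv h c‖ = ‖deriv h c‖ * r := mul_comm _ _
    _ ≤ ‖w + star w‖ := by simpa using hschwarz
    _ ≤ ‖w‖ + ‖star w‖ := norm_add_le _ _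
    _ = 2 * ‖w‖ := by rw [norm_star, two_mul]

end HalfPlane

section KobayashiMetric

variable {E : Type*} [NormedAddCommGroup E] [NormedSpace ℂ E] {D Ω : Set E} {x z v : E}

/-- The competitors in the infimum defining `kobMetric D x v`: a holomorphic disc `f` in `D` centred
at `x` and a scalar `η` with `η f'(0) = v`. The derivative is the unrestricted one, which agrees
with the derivative within the open unit disc. -/
structure IsKobayashiDisc (D : Set E) (x v : E) (f : ℂ → E) (η : ℂ) : Prop where
  differentiableOn : DifferentiableOn ℂ f (ball 0 1)
  mapsTo : MapsTo f (ball 0 1) D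
  map_zero : f 0 = x
  smul_deriv : η • deriv f 0 = v

lemma kobMetric_eq_sInf (D : Set E) (x v : E) :
    kobMetric D x v = sInf {r | ∃ f η, IsKobayashiDisc D x v f η ∧ r = ‖η‖} := by
  unfold kobMetric
  simp only [derivWithin_of_isOpen isOpen_ball (mem_ball_self one_pos)]
  refine congrArg sInf (Set.ext fun r => exists₂_congr fun f η => ?_)
  exact ⟨fun ⟨hd, hm, h0, hv, hr⟩ => ⟨⟨hd, hm, h0, hv⟩, hr⟩,
    fun ⟨⟨hd, hm, h0, hv⟩, hr⟩ => ⟨hd, hm, h0, hv, hr⟩⟩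

lemma kobMetric_nonneg (D : Set E) (x v : E) : 0 ≤ kobMetric D x v := by
  rw [kobMetric_eq_sInf]
  exact Real.sInf_nonneg (by rintro r ⟨f, η, -, rfl⟩; exact norm_nonneg η)

lemma IsKobayashiDisc.kobMetric_le {f : ℂ → E} {η : ℂ} (h : IsKobayashiDisc D x v f η) :
    kobMetric D x v ≤ ‖η‖ := by
  rw [kobMetric_eq_sInf]
  exact csInf_le ⟨0, by rintro r ⟨f, η, -, rfl⟩; exact norm_nonneg η⟩ ⟨f, η, h, rfl⟩

lemma IsKobayashiDisc.hasDerivAt {f : ℂ → E} {η : ℂ} (h : IsKobayashiDisc D x v f η) :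
    HasDerivAt f (deriv f 0) 0 :=
  (h.differentiableOn.differentiableAt (ball_mem_nhds 0 one_pos)).hasDerivAt

lemma exists_isKobayashiDisc_of_ball_subset {ρ : ℝ} (hρ : 0 < ρ) (hball : ball x ρ ⊆ D) (v : E) :
    ∃ (f : ℂ → E) (η : ℂ), IsKobayashiDisc D x v f η ∧ ‖η‖ = ‖v‖ / ρ := by
  refine ⟨fun ζ => x + ζ • ((ρ / ‖v‖ : ℝ) : ℂ) • v, ((‖v‖ / ρ : ℝ) : ℂ),
    ⟨by fun_prop, fun ζ hζ => hball ?_, by simp, ?_⟩, ?_⟩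
  · have hscale : ρ / ‖v‖ * ‖v‖ ≤ ρ := mul_comm_div ρ ‖v‖ ‖v‖ ▸
      mul_le_of_le_one_right hρ.le (div_self_le_one ‖v‖)
    rw [mem_ball_iff_norm, add_sub_cancel_left, norm_smul, norm_smul, Complex.norm_real,
      Real.norm_of_nonneg (by positivity)]
    nlinarith [mem_ball_zero_iff.1 hζ, norm_nonneg ζ]
  · have hderiv : HasDerivAt (fun ζ : ℂ => x + ζ • ((ρ / ‖v‖ : ℝ) : ℂ) • v)
        (((ρ / ‖v‖ : ℝ) : ℂ) • v) 0 := by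
      simpa using ((hasDerivAt_id (0 : ℂ)).smul_const (((ρ / ‖v‖ : ℝ) : ℂ) • v)).const_add x
    rcases eq_or_ne v 0 with rfl | hv
    · simp
    · rw [hderiv.deriv, smul_smul, ← Complex.ofReal_mul, div_mul_div_cancel₀ hρ.ne',
        div_self (norm_ne_zero_iff.2 hv), Complex.ofReal_one, one_smul]
  · rw [Complex.norm_real, Real.norm_of_nonneg (by positivity)]

lemma kobMetric_le_norm_div {ρ : ℝ} (hρ : 0 < ρ) (hball : ball x ρ ⊆ D) (v : E) :
    kobMetric D x v ≤ ‖v‖ / ρ := by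
  obtain ⟨f, η, hf, hη⟩ := exists_isKobayashiDisc_of_ball_subset hρ hball v
  exact hη ▸ hf.kobMetric_le

lemma le_kobMetric (hDo : IsOpen D) (hx : x ∈ D) {r : ℝ}
    (h : ∀ f η, IsKobayashiDisc D x v f η → r ≤ ‖η‖) : r ≤ kobMetric D x v := by
  obtain ⟨ρ, hρ, hball⟩ := Metric.isOpen_iff.1 hDo x hx
  obtain ⟨f₀, η₀, h₀, -⟩ := exists_isKobayashiDisc_of_ball_subset hρ hball v
  rw [kobMetric_eq_sInf]
  refine le_csInf ⟨_, f₀, η₀, h₀, rfl⟩ ?_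
  rintro _ ⟨f, η, hf, rfl⟩
  exact h f η hf

/-- By the Schwarz lemma, the restriction of a disc in `Ω` to radius `ρ / R` stays in
`ball z ρ`. -/
lemma mul_kobMetric_le_of_inter_ball_subset (hΩo : IsOpen Ω) (hz : z ∈ Ω) {ρ R : ℝ} (hρ : 0 < ρ)
    (hρR : ρ ≤ R) (hΩR : Ω ⊆ closedBall z R) (hloc : Ω ∩ ball z ρ ⊆ D) (v : E) :
    ρ / R * kobMetric D z v ≤ kobMetric Ω z v := by
  have hR : 0 < R := hρ.trans_le hρR
  set s := ρ / R
  have hs : 0 < s := by positivity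
  have hs1 : s ≤ 1 := div_le_one_of_le₀ hρR hR.le
  refine le_kobMetric hΩo hz fun f η hf => ?_
  have hscale : MapsTo (fun ζ : ℂ => (s : ℂ) * ζ) (ball 0 1) (ball 0 s) := fun ζ hζ => by
    rw [mem_ball_zero_iff] at hζ ⊢
    rw [norm_mul, Complex.norm_real, Real.norm_of_nonneg hs.le]
    exact mul_lt_of_lt_one_right hs hζ
  have hmaps : MapsTo f (ball 0 s) D := fun ζ hζ => by
    have hζ1 : ζ ∈ ball (0 : ℂ) 1 := ball_subset_ball hs1 hζ
    have hdist := Complex.dist_le_div_mul_dist_of_mapsTo_ball hf.differentiableOn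
      (fun ζ' hζ' => hf.map_zero.symm ▸ hΩR (hf.mapsTo hζ')) hζ1
    rw [hf.map_zero, div_one] at hdist
    exact hloc ⟨hf.mapsTo hζ1, hdist.trans_lt ((lt_div_iff₀' hR).1 hζ)⟩
  have hdisc : IsKobayashiDisc D z v (fun ζ => f (s * ζ)) (η / s) := by
    refine ⟨?_, hmaps.comp hscale, by simpa using hf.map_zero, ?_⟩
    · exact hf.differentiableOn.comp (by fun_prop) (hscale.mono_right (ball_subset_ball hs1))
    · have hs' : (s : ℂ) ≠ 0 := Complex.ofReal_ne_zero.2 hs.ne'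
      rw [deriv_comp_mul_left, mul_zero, smul_smul, div_mul_cancel₀ _ hs', hf.smul_deriv]
  calc s * kobMetric D z v ≤ s * ‖η / s‖ := by gcongr; exact hdisc.kobMetric_le
    _ = ‖η‖ := by
      rw [norm_div, Complex.norm_real, Real.norm_of_nonneg hs.le, mul_div_cancel₀ _ hs.ne']

lemma IsKobayashiDisc.norm_le_two_mul_dist_mul_norm (hDo : IsOpen D) (hDc : Convex ℝ D)
    {f : ℂ → E} {η : ℂ} (hf : IsKobayashiDisc D z v f η) {w : E} (hw : w ∉ D) {c : ℂ}
    (hwc : w = z + c • v) : ‖v‖ ≤ 2 * dist z w * ‖η‖ := by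
  obtain ⟨ℓ, hℓ⟩ := RCLike.geometric_hahn_banach_open_point (𝕜 := ℂ) hDc hDo hw
  have hzD : z ∈ D := hf.map_zero ▸ hf.mapsTo (mem_ball_self one_pos)
  have hℓz : ℓ z - ℓ w = -(c * ℓ v) := by simp [hwc]
  have hℓv : ℓ v = η * ℓ (deriv f 0) := by rw [← hf.smul_deriv, map_smul, smul_eq_mul]
  have hne : ℓ (deriv f 0) ≠ 0 := fun h0 => by
    rw [hℓv, h0, mul_zero, mul_zero, neg_zero, sub_eq_zero] at hℓz
    exact (hℓ z hzD).ne (by rw [hℓz])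
  have hschwarz := mul_norm_deriv_le_of_re_neg one_pos
    ((ℓ.differentiable.comp_differentiableOn hf.differentiableOn).sub_const (ℓ w))
    fun ζ hζ => by simpa using hℓ _ (hf.mapsTo hζ)
  rw [((ℓ.hasFDerivAt.comp_hasDerivAt (0 : ℂ) hf.hasDerivAt).sub_const (ℓ w)).deriv,
    Function.comp_apply, hf.map_zero, hℓz, norm_neg, hℓv, norm_mul, norm_mul, one_mul] at hschwarz
  have hone : 1 ≤ 2 * (‖c‖ * ‖η‖) :=
    le_of_mul_le_mul_right (by linarith) (norm_pos_iff.2 hne)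
  calc ‖v‖ ≤ 2 * (‖c‖ * ‖η‖) * ‖v‖ := le_mul_of_one_le_left (norm_nonneg v) hone
    _ = 2 * dist z w * ‖η‖ := by rw [hwc, dist_self_add_right, norm_smul]; ring

lemma norm_le_two_mul_bdistDir_mul_kobMetric (hDo : IsOpen D) (hDb : Bornology.IsBounded D)
    (hDc : Convex ℝ D) (hz : z ∈ D) (v : E) :
    ‖v‖ ≤ 2 * bdistDir D z v * kobMetric D z v := by
  rcases eq_or_ne v 0 with rfl | hv
  · rw [norm_zero]
    exact mul_nonneg (mul_nonneg zero_le_two infDist_nonneg) (kobMetric_nonneg D z 0)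
  set F := frontier D ∩ {w | ∃ c : ℂ, w = z + c • v}
  have hF : F.Nonempty := frontier_inter_complexLine_nonempty hDb hz hv
  have hpoint : ∀ w ∈ F, ‖v‖ ≤ 2 * dist z w * kobMetric D z v := by
    rintro w ⟨hwf, c, hwc⟩
    have hw : w ∉ D := (hDo.frontier_eq ▸ hwf).2
    have hzw : 0 < dist z w := dist_pos.2 (ne_of_mem_of_not_mem hz hw)
    refine (div_le_iff₀' (by positivity)).1 (le_kobMetric hDo hz fun f η hf => ?_)
    exact (div_le_iff₀' (by positivity)).2 (hf.norm_le_two_mul_dist_mul_norm hDo hDc hw hwc)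
  have hk : 0 < kobMetric D z v := by
    obtain ⟨w, hw⟩ := hF
    refine (kobMetric_nonneg D z v).lt_of_ne fun h0 => hv (norm_le_zero_iff.1 ?_)
    simpa [← h0] using hpoint w hw
  have hinf : ‖v‖ / (2 * kobMetric D z v) ≤ bdistDir D z v :=
    (le_infDist hF).2 fun w hw => (div_le_iff₀ (by positivity)).2 (by linarith [hpoint w hw])
  linarith [(div_le_iff₀ (by positivity)).1 hinf]

lemma LogTypeConvexWith.norm_le_mul_kobMetric {C ν : ℝ} (hlog : LogTypeConvexWith D C ν)
    (hΩo : IsOpen Ω) (hzD : z ∈ D) (hzΩ : z ∈ Ω) {ρ R : ℝ} (hρ : 0 < ρ) (hρR : ρ ≤ R)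
    (hΩR : Ω ⊆ closedBall z R) (hloc : Ω ∩ ball z ρ ⊆ D) (v : E) :
    ‖v‖ ≤ 2 * (C / |Real.log (bdist D z)| ^ (1 + ν)) * (R / ρ * kobMetric Ω z v) := by
  obtain ⟨hDo, -, hDb, hDc, hC, -, hdir⟩ := hlog
  have hR : 0 < R := hρ.trans_le hρR
  have hkΩ := kobMetric_nonneg Ω z v
  rcases eq_or_ne v 0 with rfl | hv
  · rw [norm_zero]; positivity
  have hkD : kobMetric D z v ≤ R / ρ * kobMetric Ω z v := by
    rw [← div_le_iff₀' (by positivity), div_eq_inv_mul, inv_div]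
    exact mul_kobMetric_le_of_inter_ball_subset hΩo hzΩ hρ hρR hΩR hloc v
  calc ‖v‖ ≤ 2 * bdistDir D z v * kobMetric D z v :=
        norm_le_two_mul_bdistDir_mul_kobMetric hDo hDb hDc hzD v
    _ ≤ 2 * (C / |Real.log (bdist D z)| ^ (1 + ν)) * (R / ρ * kobMetric Ω z v) := by
        gcongr
        · exact kobMetric_nonneg D z v
        · exact hdir z hzD v hv

end KobayashiMetric

section AbsolutelyContinuousCurves

variable {E : Type*} [NormedAddCommGroup E] [NormedSpace ℂ E] {σ g : ℝ → E} {a b s t : ℝ}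

lemma IsACWithDeriv.mono (h : IsACWithDeriv σ g a b) (has : a ≤ s) (hst : s ≤ t) (htb : t ≤ b) :
    IsACWithDeriv σ g s t := by
  have hsub : ∀ {c d}, a ≤ c → c ≤ d → d ≤ b → IntervalIntegrable g volume c d :=
    fun hac hcd hdb => h.1.mono_set <| by
      rw [uIcc_of_le hcd, uIcc_of_le (hac.trans (hcd.trans hdb))]
      exact Icc_subset_Icc hac hdb
  refine ⟨hsub has hst htb, fun u hu => ?_⟩
  have hsb : s ≤ b := hst.trans htb
  have hub : u ≤ b := hu.2.trans htb
  rw [h.2 u ⟨has.trans hu.1, hub⟩, h.2 s ⟨has, hsb⟩, add_assoc,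
    intervalIntegral.integral_add_adjacent_intervals (hsub le_rfl has hsb) (hsub has hu.1 hub)]

lemma IsACWithDeriv.continuousOn (h : IsACWithDeriv σ g a b) (hab : a ≤ b) :
    ContinuousOn σ (Icc a b) := by
  have hprim := intervalIntegral.continuousOn_primitive_interval' h.1 left_mem_uIcc
  rw [uIcc_of_le hab] at hprim
  exact (hprim.const_add (σ a)).congr h.2

lemma IsACWithDeriv.sub_eq_integral (h : IsACWithDeriv σ g a b) (hab : a ≤ b) :
    σ b - σ a = ∫ t in a..b, g t := by
  rw [h.2 b (right_mem_Icc.2 hab), add_sub_cancel_left]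

lemma isACWithDeriv_of_hasDerivAt [CompleteSpace E] (hσ : ∀ t, HasDerivAt σ (g t) t)
    (hg : Continuous g) (a b : ℝ) : IsACWithDeriv σ g a b := by
  refine ⟨hg.intervalIntegrable a b, fun t _ => ?_⟩
  rw [intervalIntegral.integral_eq_sub_of_hasDerivAt (fun s _ => hσ s) (hg.intervalIntegrable a t),
    add_sub_cancel]

lemma AlmostGeodesicOn.mono {Ω : Set E} {lam κ : ℝ} (h : AlmostGeodesicOn Ω lam κ σ g a b)
    (has : a ≤ s) (hst : s ≤ t) (htb : t ≤ b) : AlmostGeodesicOn Ω lam κ σ g s t := by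
  obtain ⟨hmaps, hac, hdist, hspeed⟩ := h
  have hsub : Icc s t ⊆ Icc a b := Icc_subset_Icc has htb
  exact ⟨hmaps.mono_left hsub, hac.mono has hst htb,
    fun u hu v hv => hdist u (hsub hu) v (hsub hv), hspeed.mono fun u h hu => h (hsub hu)⟩

end AbsolutelyContinuousCurves

section QuadraticBezier

open AffineMap

/-- The quadratic Bézier curve from `x` to `y` with control point `o`. It is the explicit curve
along which Kobayashi lengths in convex sets are estimated; for real `x`, `o`, `y` it gives the
radii of balls around such a curve. -/
def quadBezier {E : Type*} [AddCommGroup E] [Module ℝ E] (x o y : E) (s : ℝ) : E :=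
  lineMap (lineMap x o s) (lineMap o y s) s

variable {E : Type*} [NormedAddCommGroup E] [NormedSpace ℝ E] {D : Set E} {x o y : E} {m r s : ℝ}

lemma quadBezier_zero (x o y : E) : quadBezier x o y 0 = x := by
  simp only [quadBezier, lineMap_apply_zero]

lemma quadBezier_one (x o y : E) : quadBezier x o y 1 = y := by
  simp only [quadBezier, lineMap_apply_one]

lemma hasDerivAt_quadBezier (x o y : E) (s : ℝ) :
    HasDerivAt (quadBezier x o y) ((2 : ℝ) • lineMap (o - x) (y - o) s) s := by
  have hxo : HasDerivAt (fun s : ℝ => lineMap x o s) (o - x) s := hasDerivAt_lineMap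
  have hoy : HasDerivAt (fun s : ℝ => lineMap o y s) (y - o) s := hasDerivAt_lineMap
  have h := ((hasDerivAt_id' s).smul (hoy.sub hxo)).add hxo
  refine (h.congr_of_eventuallyEq (.of_forall fun t => ?_)).congr_deriv ?_
  · exact lineMap_apply_module' _ _ t
  · simp only [lineMap_apply_module, Pi.sub_apply]
    module

lemma norm_deriv_quadBezier_le {R : ℝ} (hx : ‖o - x‖ ≤ R) (hy : ‖y - o‖ ≤ R) (hs : s ∈ Icc 0 1) :
    ‖(2 : ℝ) • lineMap (o - x) (y - o) s‖ ≤ 2 * R := by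
  have hmem := (convex_closedBall (0 : E) R).lineMap_mem (mem_closedBall_zero_iff.2 hx)
    (mem_closedBall_zero_iff.2 hy) hs
  rw [norm_smul, Real.norm_two]
  exact mul_le_mul_of_nonneg_left (mem_closedBall_zero_iff.1 hmem) zero_le_two

lemma lineMap_pos (hm : 0 < m) (hr : 0 < r) (hs : s ∈ Icc 0 1) : 0 < lineMap m r s :=
  (convex_Ioi (0 : ℝ)).lineMap_mem hm hr hs

lemma ball_lineMap_subset (hD : Convex ℝ D) (hm : 0 < m) (hr : 0 < r) (hs : s ∈ Icc 0 1)
    (hx : ball x m ⊆ D) (hy : ball y r ⊆ D) : ball (lineMap x y s) (lineMap m r s) ⊆ D := by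
  intro w hw
  set t : ℝ := lineMap m r s with ht
  have ht0 : 0 < t := lineMap_pos hm hr hs
  obtain ⟨u, hu, rfl⟩ : ∃ u : E, ‖u‖ < 1 ∧ lineMap x y s + t • u = w := by
    refine ⟨t⁻¹ • (w - lineMap x y s), ?_, by rw [smul_inv_smul₀ ht0.ne', add_sub_cancel]⟩
    rw [norm_smul, norm_inv, Real.norm_of_nonneg ht0.le, inv_mul_lt_one₀ ht0]
    exact mem_ball_iff_norm.1 hw
  have hmem : ∀ (p : E) {τ : ℝ}, 0 < τ → p + τ • u ∈ ball p τ := fun p τ hτ => by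
    rw [mem_ball_iff_norm, add_sub_cancel_left, norm_smul, Real.norm_of_nonneg hτ.le]
    exact mul_lt_of_lt_one_right hτ hu
  have hsplit : lineMap x y s + t • u = lineMap (x + m • u) (y + r • u) s := by
    simp only [ht, lineMap_apply_module, smul_eq_mul]
    module
  exact hsplit ▸ hD.lineMap_mem (hx (hmem x hm)) (hy (hmem y hr)) hs

lemma ball_quadBezier_subset (hD : Convex ℝ D) (hm : 0 < m) (hr : 0 < r) (hs : s ∈ Icc 0 1)
    (hx : ball x m ⊆ D) (ho : ball o r ⊆ D) (hy : ball y m ⊆ D) :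
    ball (quadBezier x o y s) (quadBezier m r m s) ⊆ D :=
  ball_lineMap_subset hD (lineMap_pos hm hr hs) (lineMap_pos hr hm hs) hs
    (ball_lineMap_subset hD hm hr hs hx ho) (ball_lineMap_subset hD hr hm hs ho hy)

lemma quadBezier_pos (hm : 0 < m) (hr : 0 < r) (hs : s ∈ Icc 0 1) : 0 < quadBezier m r m s :=
  lineMap_pos (lineMap_pos hm hr hs) (lineMap_pos hr hm hs) hs

lemma le_quadBezier_of_le_one (hm : 0 < m) (hmr : m ≤ r) (hr : r ≤ 1) (hs : s ∈ Icc 0 1) :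
    r / 4 * ((s + m) * (1 - s + m)) ≤ quadBezier m r m s := by
  obtain ⟨hs0, hs1⟩ := hs
  have hval : quadBezier m r m s = 2 * (s * (1 - s)) * r + ((1 - s) ^ 2 + s ^ 2) * m := by
    simp only [quadBezier, lineMap_apply_module, smul_eq_mul]
    ring
  have hss : 0 ≤ s * (1 - s) := mul_nonneg hs0 (by linarith)
  have hprod : (s + m) * (1 - s + m) ≤ s * (1 - s) + 2 * m := by nlinarith
  have hsq : m / 2 ≤ ((1 - s) ^ 2 + s ^ 2) * m := by nlinarith [sq_nonneg (1 - 2 * s)]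
  calc r / 4 * ((s + m) * (1 - s + m)) ≤ r / 4 * (s * (1 - s) + 2 * m) := by gcongr; linarith
    _ ≤ 2 * (s * (1 - s)) * r + m / 2 := by nlinarith
    _ ≤ quadBezier m r m s := by rw [hval]; gcongr

lemma inv_quadBezier_le (hm : 0 < m) (hmr : m ≤ r) (hr : r ≤ 1) (hs : s ∈ Icc 0 1) :
    (quadBezier m r m s)⁻¹ ≤ 4 / r * ((s + m)⁻¹ + (1 - s + m)⁻¹) := by
  have hr0 : 0 < r := hm.trans_le hmr
  have hleft : 0 < s + m := by linarith [hs.1]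
  have hright : 0 < 1 - s + m := by linarith [hs.2]
  calc (quadBezier m r m s)⁻¹ ≤ (r / 4 * ((s + m) * (1 - s + m)))⁻¹ :=
        inv_anti₀ (by positivity) (le_quadBezier_of_le_one hm hmr hr hs)
    _ = 4 / r * (1 / ((s + m) * (1 - s + m))) := by field_simp
    _ ≤ 4 / r * ((1 + 2 * m) / ((s + m) * (1 - s + m))) := by gcongr; linarith
    _ = 4 / r * ((s + m)⁻¹ + (1 - s + m)⁻¹) := by field_simp; ring

end QuadraticBezier

section KobayashiDistance

variable {E : Type*} [NormedAddCommGroup E] [NormedSpace ℂ E] {D Ω : Set E}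

lemma kobDist_le_integral_of_kobMetric_le {σ g : ℝ → E} {a b : ℝ} {F : ℝ → ℝ} (hab : a ≤ b)
    (hac : IsACWithDeriv σ g a b) (hmaps : MapsTo σ (Icc a b) Ω)
    (hF : IntervalIntegrable F volume a b)
    (hle : ∀ t ∈ Icc a b, kobMetric Ω (σ t) (g t) ≤ F t) :
    kobDist Ω (σ a) (σ b) ≤ ∫ t in a..b, F t := by
  have hlength : kobDist Ω (σ a) (σ b) ≤ ∫ t in a..b, kobMetric Ω (σ t) (g t) := by
    refine csInf_le ⟨0, ?_⟩ ⟨a, b, σ, g, hab, hac, hmaps, rfl, rfl, rfl⟩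
    rintro _ ⟨_, _, σ', g', hab', -, -, -, -, rfl⟩
    exact intervalIntegral.integral_nonneg hab' fun t _ => kobMetric_nonneg Ω (σ' t) (g' t)
  -- Comparing norms avoids proving that the Kobayashi metric is measurable along the curve.
  refine hlength.trans ((Real.le_norm_self _).trans ?_)
  refine intervalIntegral.norm_integral_le_of_norm_le hab (.of_forall fun t ht => ?_) hF
  rw [Real.norm_of_nonneg (kobMetric_nonneg Ω (σ t) (g t))]
  exact hle t (Ioc_subset_Icc_self ht)

lemma integral_inv_add_inv_eq_two_mul_log {m : ℝ} (hm : 0 < m) :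
    IntervalIntegrable (fun s : ℝ => (s + m)⁻¹ + (1 - s + m)⁻¹) volume 0 1 ∧
      ∫ s in (0 : ℝ)..1, ((s + m)⁻¹ + (1 - s + m)⁻¹) = 2 * Real.log ((1 + m) / m) := by
  have hleft : IntervalIntegrable (fun s : ℝ => (s + m)⁻¹) volume 0 1 := by
    refine ContinuousOn.intervalIntegrable (ContinuousOn.inv₀ (by fun_prop) fun s hs => ?_)
    rw [uIcc_of_le zero_le_one] at hs
    linarith [hs.1]
  have hright : IntervalIntegrable (fun s : ℝ => (1 - s + m)⁻¹) volume 0 1 := by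
    simpa using (hleft.comp_sub_left 1).symm
  have hint : ∫ s in (0 : ℝ)..1, (s + m)⁻¹ = Real.log ((1 + m) / m) := by
    rw [intervalIntegral.integral_comp_add_right (fun s : ℝ => s⁻¹),
      integral_inv_of_pos (by linarith) (by linarith), zero_add]
  refine ⟨hleft.add hright, ?_⟩
  rw [intervalIntegral.integral_add hleft hright,
    intervalIntegral.integral_comp_sub_left (fun s : ℝ => (s + m)⁻¹) 1, sub_self, sub_zero, hint,
    two_mul]

lemma kobDist_le_mul_log [CompleteSpace E] (hDΩ : D ⊆ Ω) (hDc : Convex ℝ D) {o x y : E}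
    {r m R : ℝ} (hr : r ≤ 1) (hm : 0 < m) (hmr : m ≤ r) (ho : ball o r ⊆ D) (hx : ball x m ⊆ D)
    (hy : ball y m ⊆ D) (hxo : ‖o - x‖ ≤ R) (hyo : ‖y - o‖ ≤ R) :
    kobDist Ω x y ≤ 16 * R / r * Real.log (2 / m) := by
  have hr0 : 0 < r := hm.trans_le hmr
  have hR : 0 ≤ R := (norm_nonneg _).trans hxo
  have hball : ∀ s ∈ Icc (0 : ℝ) 1, ball (quadBezier x o y s) (quadBezier m r m s) ⊆ Ω :=
    fun s hs => (ball_quadBezier_subset hDc hm hr0 hs hx ho hy).trans hDΩ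
  have hspeed : ∀ s ∈ Icc (0 : ℝ) 1,
      kobMetric Ω (quadBezier x o y s) ((2 : ℝ) • AffineMap.lineMap (o - x) (y - o) s) ≤
        2 * R * (4 / r * ((s + m)⁻¹ + (1 - s + m)⁻¹)) := fun s hs =>
    calc _ ≤ 2 * R / quadBezier m r m s :=
          (kobMetric_le_norm_div (quadBezier_pos hm hr0 hs) (hball s hs) _).trans <|
            div_le_div_of_nonneg_right (norm_deriv_quadBezier_le hxo hyo hs)
              (quadBezier_pos hm hr0 hs).le
      _ ≤ _ := mul_le_mul_of_nonneg_left (inv_quadBezier_le hm hmr hr hs) (by positivity)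
  obtain ⟨hint, hintegral⟩ := integral_inv_add_inv_eq_two_mul_log hm
  have hcurve := kobDist_le_integral_of_kobMetric_le zero_le_one
    (isACWithDeriv_of_hasDerivAt (hasDerivAt_quadBezier x o y) (by fun_prop) 0 1)
    (fun s hs => hball s hs (mem_ball_self (quadBezier_pos hm hr0 hs)))
    ((hint.const_mul _).const_mul _) hspeed
  rw [quadBezier_zero, quadBezier_one, intervalIntegral.integral_const_mul,
    intervalIntegral.integral_const_mul, hintegral] at hcurve
  calc kobDist Ω x y ≤ 2 * R * (4 / r * (2 * Real.log ((1 + m) / m))) := hcurve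
    _ ≤ 2 * R * (4 / r * (2 * Real.log (2 / m))) := by gcongr; linarith
    _ = 16 * R / r * Real.log (2 / m) := by ring

lemma exists_kobDist_le_sub_mul_log [CompleteSpace E] (hΩb : Bornology.IsBounded Ω) (hDΩ : D ⊆ Ω)
    (hDo : IsOpen D) (hDne : D.Nonempty) (hDc : Convex ℝ D) :
    ∃ A B : ℝ, 0 ≤ A ∧ 0 ≤ B ∧ ∀ x ∈ D, ∀ y ∈ D, ∀ m ∈ Ioc (0 : ℝ) 1, m ≤ bdist D x →
      m ≤ bdist D y → kobDist Ω x y ≤ A - B * Real.log m := by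
  obtain ⟨o, ho⟩ := hDne
  obtain ⟨r, ⟨hr0, hr1⟩, hor⟩ : ∃ r ∈ Ioc (0 : ℝ) 1, ball o r ⊆ D := by
    obtain ⟨r, hr, hor⟩ := Metric.isOpen_iff.1 hDo o ho
    exact ⟨min r 1, ⟨lt_min hr one_pos, min_le_right r 1⟩,
      (ball_subset_ball (min_le_left r 1)).trans hor⟩
  have hdiam : ∀ x ∈ D, ∀ y ∈ D, ‖x - y‖ ≤ diam Ω := fun x hx y hy =>
    dist_eq_norm x y ▸ dist_le_diam_of_mem hΩb (hDΩ hx) (hDΩ hy)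
  have hB : 0 ≤ 16 * diam Ω / r := by positivity
  refine ⟨16 * diam Ω / r * Real.log (2 / r), 16 * diam Ω / r,
    mul_nonneg hB (Real.log_nonneg ((one_le_div hr0).2 (by linarith))), hB, ?_⟩
  intro x hx y hy m ⟨hm0, hm1⟩ hmx hmy
  have hmr : m * r ≤ m := mul_le_of_le_one_right hm0.le hr1
  calc kobDist Ω x y ≤ 16 * diam Ω / r * Real.log (2 / (m * r)) :=
        kobDist_le_mul_log hDΩ hDc hr1 (by positivity) (mul_le_of_le_one_left hr0.le hm1) hor
          (ball_subset_of_le_bdist hDo hx (hmr.trans hmx))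
          (ball_subset_of_le_bdist hDo hy (hmr.trans hmy)) (hdiam o ho x hx) (hdiam y hy o ho)
    _ = _ := by
      rw [Real.log_div two_ne_zero (by positivity), Real.log_mul hm0.ne' hr0.ne',
        Real.log_div two_ne_zero hr0.ne']
      ring

end KobayashiDistance

section PowerDecay

variable {L ν : ℝ}

lemma integral_add_abs_rpow_neg (hL : 0 < L) (hν : 0 < ν) :
    ∫ x : ℝ, (L + |x|) ^ (-(1 + ν)) = 2 * (L ^ (-ν) / ν) := by
  have hshift : ∫ x in Ioi (0 : ℝ), (L + x) ^ (-(1 + ν)) = ∫ x in Ioi L, x ^ (-(1 + ν)) := by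
    simpa using (measurePreserving_add_left volume L).setIntegral_preimage_emb
      (measurableEmbedding_addLeft L) (fun x : ℝ => x ^ (-(1 + ν))) (Ioi L)
  rw [integral_comp_abs (f := fun x => (L + x) ^ (-(1 + ν))), hshift,
    integral_Ioi_rpow_of_lt (by linarith) hL, neg_add_rev, neg_add_cancel_right, neg_div_neg_eq]

lemma intervalIntegral_add_abs_sub_rpow_neg_le (hL : 0 < L) (hν : 0 < ν) {s t : ℝ} (hst : s ≤ t)
    (u : ℝ) :
    IntervalIntegrable (fun x => (L + |x - u|) ^ (-(1 + ν))) volume s t ∧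
      ∫ x in s..t, (L + |x - u|) ^ (-(1 + ν)) ≤ 2 * (L ^ (-ν) / ν) := by
  have hint : Integrable fun x : ℝ => (L + |x|) ^ (-(1 + ν)) :=
    .of_integral_ne_zero (by rw [integral_add_abs_rpow_neg hL hν]; positivity)
  refine ⟨(hint.comp_sub_right u).intervalIntegrable, ?_⟩
  rw [← integral_add_abs_rpow_neg hL hν,
    intervalIntegral.integral_comp_sub_right (fun x => (L + |x|) ^ (-(1 + ν))),
    intervalIntegral.integral_of_le (by linarith)]
  exact setIntegral_le_integral hint (.of_forall fun x => by positivity)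

lemma IsACWithDeriv.norm_sub_le_of_norm_le_rpow {E : Type*} [NormedAddCommGroup E]
    [NormedSpace ℂ E] {σ g : ℝ → E} {a b K u : ℝ} (h : IsACWithDeriv σ g a b) (hab : a ≤ b)
    (hL : 0 < L) (hν : 0 < ν) (hK : 0 ≤ K)
    (hg : ∀ᵐ x, x ∈ Ioc a b → ‖g x‖ ≤ K * (L + |x - u|) ^ (-(1 + ν))) :
    ‖σ b - σ a‖ ≤ K * (2 * (L ^ (-ν) / ν)) := by
  obtain ⟨hint, hle⟩ := intervalIntegral_add_abs_sub_rpow_neg_le hL hν hab u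
  calc ‖σ b - σ a‖ = ‖∫ x in a..b, g x‖ := by rw [h.sub_eq_integral hab]
    _ ≤ ∫ x in a..b, K * (L + |x - u|) ^ (-(1 + ν)) :=
      intervalIntegral.norm_integral_le_of_norm_le hab hg (hint.const_mul K)
    _ ≤ K * (2 * (L ^ (-ν) / ν)) := by rw [intervalIntegral.integral_const_mul]; gcongr

lemma exists_ge_mul_rpow_neg_lt (hν : 0 < ν) (K L₀ : ℝ) {η : ℝ} (hη : 0 < η) :
    ∃ L, L₀ ≤ L ∧ K * (2 * (L ^ (-ν) / ν)) < η := by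
  have hlim : Tendsto (fun L : ℝ => K * (2 * (L ^ (-ν) / ν))) atTop (𝓝 0) := by
    simpa using (((tendsto_rpow_neg_atTop hν).div_const ν).const_mul 2).const_mul K
  exact ((eventually_ge_atTop L₀).and (hlim.eventually_lt_const hη)).exists

lemma inv_rpow_le_rpow_mul_rpow_neg {p q x y : ℝ} (hp : 0 ≤ p) (hq : 0 < q) (hy : 0 < y)
    (h : y ≤ q * x) : (x ^ p)⁻¹ ≤ q ^ p * y ^ (-p) := by
  have hdiv : y / q ≤ x := (div_le_iff₀' hq).2 h
  calc (x ^ p)⁻¹ ≤ ((y / q) ^ p)⁻¹ := by gcongr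
    _ = q ^ p * y ^ (-p) := by
      rw [Real.div_rpow hy.le hq.le, inv_div, Real.rpow_neg hy.le, div_eq_mul_inv]

end PowerDecay

section Visibility

variable {E : Type*} [NormedAddCommGroup E] [NormedSpace ℂ E] {D Ω V : Set E} {σ g : ℝ → E}
  {a b s t C ν lam κ ρ η : ℝ}

lemma LogTypeConvexWith.norm_le_mul_rpow_neg (hlog : LogTypeConvexWith D C ν) (hΩo : IsOpen Ω)
    {z v : E} (hzD : z ∈ D) (hzΩ : z ∈ Ω) {R q y : ℝ} (hρ : 0 < ρ) (hρR : ρ ≤ R)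
    (hΩR : Ω ⊆ closedBall z R) (hloc : Ω ∩ ball z ρ ⊆ D) (hv : kobMetric Ω z v ≤ lam)
    (hq : 0 < q) (hy : 0 < y) (hyq : y ≤ q * -Real.log (bdist D z)) :
    ‖v‖ ≤ 2 * C * (R / ρ * lam) * q ^ (1 + ν) * y ^ (-(1 + ν)) := by
  have hR : 0 < R := hρ.trans_le hρR
  have hC : 0 < C := hlog.2.2.2.2.1
  have hν : 0 < ν := hlog.2.2.2.2.2.1
  have hk : 0 ≤ kobMetric Ω z v := kobMetric_nonneg Ω z v
  have : 0 ≤ lam := hk.trans hv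
  calc ‖v‖ ≤ 2 * (C / |Real.log (bdist D z)| ^ (1 + ν)) * (R / ρ * kobMetric Ω z v) :=
        hlog.norm_le_mul_kobMetric hΩo hzD hzΩ hρ hρR hΩR hloc v
    _ ≤ 2 * (C * (q ^ (1 + ν) * y ^ (-(1 + ν)))) * (R / ρ * lam) := by
        rw [div_eq_mul_inv C]
        gcongr
        refine inv_rpow_le_rpow_mul_rpow_neg (by positivity) hq hy (hyq.trans ?_)
        gcongr
        exact neg_le_abs _
    _ = _ := by ring

lemma AlmostGeodesicOn.add_abs_sub_le (h : AlmostGeodesicOn Ω lam κ σ g a b) (hlam : 0 < lam)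
    (hs : s ∈ Icc a b) (ht : t ∈ Icc a b) {A B L ℓ : ℝ}
    (hK : kobDist Ω (σ s) (σ t) ≤ A + B * ℓ) (hL : κ + A ≤ L) (hLℓ : L ≤ ℓ) :
    L + |t - s| ≤ (1 + lam * (1 + B)) * ℓ := by
  have hlow : |t - s| / lam ≤ (1 + B) * ℓ := by
    have := (h.2.2.1 s hs t ht).1
    rw [one_div_mul_eq_div] at this
    linarith
  have habs : |t - s| ≤ (1 + B) * ℓ * lam := (div_le_iff₀ hlam).1 hlow
  linarith

/-- Visibility: such a curve cannot stay close to `∂D`, since its speed would be dominated by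
`(L + |t - u|) ^ -(1 + ν)` with `L` large, `u` being the time at which it is deepest in `D`. -/
lemma LogTypeConvexWith.exists_le_bdist_of_le_norm_sub [CompleteSpace E]
    (hlog : LogTypeConvexWith D C ν) (hΩo : IsOpen Ω) (hΩb : Bornology.IsBounded Ω) (hDΩ : D ⊆ Ω)
    (hρ : 0 < ρ) (hV : ∀ z ∈ V, Ω ∩ ball z ρ ⊆ D) (hη : 0 < η) (hlam : 0 < lam) (κ : ℝ) :
    ∃ c ∈ Ioc (0 : ℝ) 1, ∀ {a b : ℝ} {σ g : ℝ → E}, a ≤ b → AlmostGeodesicOn Ω lam κ σ g a b →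
      MapsTo σ (Icc a b) V → η ≤ ‖σ b - σ a‖ → ∃ u ∈ Icc a b, c ≤ bdist D (σ u) := by
  obtain ⟨hDo, hDne, hDb, hDc, hC, hν, -⟩ := id hlog
  obtain ⟨A, B, -, hB, hAB⟩ := exists_kobDist_le_sub_mul_log hΩb hDΩ hDo hDne hDc
  set R := max ρ (diam Ω)
  set q := 1 + lam * (1 + B)
  set K := 2 * C * (R / ρ * lam) * q ^ (1 + ν)
  have : 0 < R := lt_max_of_lt_left hρ
  obtain ⟨L, hL₀, hLη⟩ := exists_ge_mul_rpow_neg_lt hν K (max 1 (κ + A)) hη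
  have hL1 : 1 ≤ L := (le_max_left _ _).trans hL₀
  refine ⟨Real.exp (-L), ⟨Real.exp_pos _, Real.exp_le_one_iff.2 (by linarith)⟩, ?_⟩
  intro a b σ g hab hσ hmaps hdisp
  by_contra! hclose
  obtain ⟨hσΩ, hac, -, hspeed⟩ := id hσ
  have : Nontrivial E := nontrivial_of_ne _ _ (norm_pos_iff.1 (hη.trans_le hdisp))
  have hσD : MapsTo σ (Icc a b) D := fun x hx =>
    hV _ (hmaps hx) ⟨hσΩ hx, mem_ball_self hρ⟩
  obtain ⟨u, hu, humax⟩ := isCompact_Icc.exists_isMaxOn (nonempty_Icc.2 hab)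
    ((continuous_infDist_pt (frontier D)).comp_continuousOn (hac.continuousOn hab))
  refine (hac.norm_sub_le_of_norm_le_rpow (u := u) (K := K) hab (by linarith) hν (by positivity)
    ?_).not_gt (hLη.trans_le hdisp)
  filter_upwards [hspeed] with x hkob hx
  replace hx := Ioc_subset_Icc_self hx
  have hpos : 0 < bdist D (σ x) := bdist_pos hDo hDb (hσD hx)
  have hlogL : L ≤ -Real.log (bdist D (σ x)) := by
    linarith [(Real.log_le_iff_le_exp hpos).2 (hclose x hx).le]
  have hle1 : bdist D (σ x) ≤ 1 :=
    (hclose x hx).le.trans (Real.exp_le_one_iff.2 (by linarith))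
  have hK : kobDist Ω (σ u) (σ x) ≤ A + B * -Real.log (bdist D (σ x)) := by
    linarith [hAB _ (hσD hu) _ (hσD hx) _ ⟨hpos, hle1⟩ (humax hx) le_rfl]
  exact hlog.norm_le_mul_rpow_neg hΩo (hσD hx) (hσΩ hx) hρ (le_max_left _ _)
    (fun y hy => (dist_le_diam_of_mem hΩb hy (hσΩ hx)).trans (le_max_right _ _))
    (hV _ (hmaps hx)) (hkob hx) (by positivity) (by positivity)
    (hσ.add_abs_sub_le hlam hu hx hK ((le_max_right _ _).trans hL₀) hlogL)

end Visibility

section Exit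

variable {f : ℝ → ℝ} {a b c : ℝ}

lemma exists_eq_forall_Icc_left_le (hf : ContinuousOn f (Icc a b)) (ha : f a ≤ c)
    (hc : ∃ t ∈ Icc a b, c ≤ f t) : ∃ t ∈ Icc a b, f t = c ∧ ∀ u ∈ Icc a t, f u ≤ c := by
  have hhit : ∀ t ∈ Icc a b, c ≤ f t → ∃ s ∈ Icc a t, f s = c := fun t ht hct =>
    intermediate_value_Icc ht.1 (hf.mono (Icc_subset_Icc_right ht.2)) ⟨ha, hct⟩
  have hcompact : IsCompact (Icc a b ∩ f ⁻¹' {c}) :=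
    isCompact_Icc.of_isClosed_subset
      (hf.preimage_isClosed_of_isClosed isClosed_Icc isClosed_singleton) inter_subset_left
  obtain ⟨t, ⟨ht, htc⟩, hleast⟩ := hcompact.exists_isLeast <| by
    obtain ⟨t, ht, hct⟩ := hc
    obtain ⟨s, hs, hsc⟩ := hhit t ht hct
    exact ⟨s, ⟨hs.1, hs.2.trans ht.2⟩, hsc⟩
  refine ⟨t, ht, htc, fun u hu => le_of_not_gt fun hcu => ?_⟩
  have hub : u ≤ b := hu.2.trans ht.2
  obtain ⟨s, hs, hsc⟩ := hhit u ⟨hu.1, hub⟩ hcu.le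
  have hts : t ≤ s := hleast ⟨⟨hs.1, hs.2.trans hub⟩, hsc⟩
  exact hcu.ne' (le_antisymm hu.2 (hts.trans hs.2) ▸ htc)

lemma exists_eq_forall_Icc_right_le (hf : ContinuousOn f (Icc a b)) (hb : f b ≤ c)
    (hc : ∃ t ∈ Icc a b, c ≤ f t) : ∃ t ∈ Icc a b, f t = c ∧ ∀ u ∈ Icc t b, f u ≤ c := by
  have hneg : MapsTo (fun t : ℝ => -t) (Icc (-b) (-a)) (Icc a b) := fun t ht =>
    ⟨le_neg.1 ht.2, neg_le.1 ht.1⟩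
  obtain ⟨t, ht, hct⟩ := hc
  obtain ⟨s, hs, hsc, hle⟩ := exists_eq_forall_Icc_left_le (f := fun t => f (-t)) (c := c)
    (hf.comp continuousOn_neg hneg) (by rwa [neg_neg])
    ⟨-t, ⟨neg_le_neg ht.2, neg_le_neg ht.1⟩, by rwa [neg_neg]⟩
  refine ⟨-s, hneg hs, hsc, fun u hu => ?_⟩
  simpa only [neg_neg] using hle (-u) ⟨neg_le_neg hu.2, neg_le.1 hu.1⟩

end Exit

section DeepTimes

variable {E : Type*} [NormedAddCommGroup E] [NormedSpace ℂ E] [CompleteSpace E] {D Ω : Set E}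

lemma LogTypeConvexWith.exists_le_bdist_of_exits {C ν : ℝ} (hlog : LogTypeConvexWith D C ν)
    (hΩo : IsOpen Ω) (hΩb : Bornology.IsBounded Ω) (hDΩ : D ⊆ Ω) {ξ : E} {ρ₀ ρ₁ ρ₂ lam : ℝ}
    (h₀₁ : ρ₀ < ρ₁) (h₁₂ : ρ₁ < ρ₂) (hloc : Ω ∩ ball ξ ρ₂ ⊆ D) (hlam : 0 < lam) (κ : ℝ) :
    ∃ c ∈ Ioc (0 : ℝ) 1, ∀ {a b : ℝ} {σ g : ℝ → E}, a ≤ b → AlmostGeodesicOn Ω lam κ σ g a b →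
      σ a ∈ ball ξ ρ₀ → σ b ∈ ball ξ ρ₀ → ¬MapsTo σ (Icc a b) (ball ξ ρ₁) →
      ∃ s₁ ∈ Icc a b, ∃ s₂ ∈ Icc a b, c ≤ bdist D (σ s₁) ∧ c ≤ bdist D (σ s₂) ∧
        MapsTo σ (Icc a s₁ ∪ Icc s₂ b) (closedBall ξ ρ₁) := by
  obtain ⟨c, hc, hvis⟩ := hlog.exists_le_bdist_of_le_norm_sub (V := closedBall ξ ρ₁)
    (ρ := ρ₂ - ρ₁) (η := ρ₁ - ρ₀) hΩo hΩb hDΩ (sub_pos.2 h₁₂) (fun z hz => (inter_subset_inter_right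
      Ω (ball_subset_ball' (by linarith [mem_closedBall.1 hz]))).trans hloc) (sub_pos.2 h₀₁) hlam κ
  refine ⟨c, hc, fun {a b σ g} hab hσ ha hb hexit => ?_⟩
  have hfar : ∀ {x y : E}, x ∈ ball ξ ρ₀ → dist y ξ = ρ₁ → ρ₁ - ρ₀ ≤ ‖y - x‖ := by
    intro x y hx hy
    linarith [dist_triangle y x ξ, mem_ball.1 hx, dist_eq_norm y x]
  have hcont : ContinuousOn (fun t => dist (σ t) ξ) (Icc a b) :=
    (continuous_id.dist continuous_const).comp_continuousOn (hσ.2.1.continuousOn hab)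
  have hhit : ∃ t ∈ Icc a b, ρ₁ ≤ dist (σ t) ξ := by
    simpa only [MapsTo, mem_ball, not_forall, not_lt, exists_prop] using hexit
  obtain ⟨t₁, ht₁, hd₁, hle₁⟩ :=
    exists_eq_forall_Icc_left_le hcont ((mem_ball.1 ha).trans h₀₁).le hhit
  obtain ⟨t₂, ht₂, hd₂, hle₂⟩ :=
    exists_eq_forall_Icc_right_le hcont ((mem_ball.1 hb).trans h₀₁).le hhit
  obtain ⟨s₁, hs₁, hc₁⟩ := hvis ht₁.1 (hσ.mono le_rfl ht₁.1 ht₁.2) hle₁ (hfar ha hd₁)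
  obtain ⟨s₂, hs₂, hc₂⟩ := hvis ht₂.2 (hσ.mono ht₂.1 ht₂.2 le_rfl) hle₂
    (norm_sub_rev (σ t₂) (σ b) ▸ hfar hb hd₂)
  refine ⟨s₁, ⟨hs₁.1, hs₁.2.trans ht₁.2⟩, s₂, ⟨ht₂.1.trans hs₂.1, hs₂.2⟩, hc₁, hc₂, ?_⟩
  rintro t (ht | ht)
  · exact hle₁ t ⟨ht.1, ht.2.trans hs₁.2⟩
  · exact hle₂ t ⟨hs₂.1.trans ht.1, ht.2⟩

end DeepTimes

section RoughGeodesics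

/-- The time change which stops at `s₁` during the time interval `[s₁, s₂)` and then jumps to `s₂`;
composed with it, a curve has its stretch between these times replaced by a constant. -/
noncomputable def collapse (s₁ s₂ t : ℝ) : ℝ :=
  open Classical in if t ∈ Ico s₁ s₂ then s₁ else t

variable {a b s₁ s₂ t C M : ℝ}

lemma collapse_left (hs₁ : a ≤ s₁) : collapse s₁ s₂ a = a := by
  unfold collapse
  split_ifs with h
  · exact h.1.antisymm hs₁ ▸ rfl
  · rfl

lemma collapse_right (hs₂ : s₂ ≤ b) : collapse s₁ s₂ b = b :=
  if_neg fun h => hs₂.not_gt h.2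

lemma collapse_mem (hs₁ : a ≤ s₁) (ht : t ∈ Icc a b) :
    collapse s₁ s₂ t ∈ Icc a s₁ ∪ Icc s₂ b := by
  unfold collapse
  split_ifs with h
  · exact Or.inl (right_mem_Icc.2 hs₁)
  · rcases le_total t s₁ with hts | hts
    · exact Or.inl ⟨ht.1, hts⟩
    · exact (lt_or_ge t s₂).elim (fun hlt => absurd ⟨hts, hlt⟩ h) fun hge => Or.inr ⟨hge, ht.2⟩

lemma abs_collapse_sub_le (s₁ s₂ t : ℝ) : |collapse s₁ s₂ t - t| ≤ |s₂ - s₁| := by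
  unfold collapse
  split_ifs with h
  · rw [abs_sub_comm, abs_of_nonneg (by linarith [h.1])]
    exact (by linarith [h.2] : t - s₁ ≤ s₂ - s₁).trans (le_abs_self _)
  · rw [sub_self, abs_zero]
    exact abs_nonneg _

variable {E : Type*} [NormedAddCommGroup E] [NormedSpace ℂ E] {Ω : Set E} {σ g : ℝ → E}

lemma AlmostGeodesicOn.roughGeodesicOn {κ : ℝ} (h : AlmostGeodesicOn Ω 1 κ σ g a b) :
    RoughGeodesicOn Ω κ σ a b :=
  ⟨h.1, fun s hs t ht => by simpa only [div_one, one_mul] using h.2.2.1 s hs t ht⟩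

lemma RoughGeodesicOn.mono {C' : ℝ} (h : RoughGeodesicOn Ω C σ a b) (hC : C ≤ C') :
    RoughGeodesicOn Ω C' σ a b :=
  ⟨h.1, fun s hs t ht => ⟨by linarith [(h.2 s hs t ht).1], by linarith [(h.2 s hs t ht).2]⟩⟩

lemma RoughGeodesicOn.comp_of_abs_sub_le (h : RoughGeodesicOn Ω C σ a b) {φ : ℝ → ℝ}
    (hφ : MapsTo φ (Icc a b) (Icc a b)) (hM : ∀ t ∈ Icc a b, |φ t - t| ≤ M) :
    RoughGeodesicOn Ω (C + 2 * M) (σ ∘ φ) a b := by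
  refine ⟨h.1.comp hφ, fun s hs t ht => ?_⟩
  obtain ⟨hlow, hupp⟩ := h.2 (φ s) (hφ hs) (φ t) (hφ ht)
  have hclose : |(|φ t - φ s| - |t - s|)| ≤ 2 * M := by
    calc |(|φ t - φ s| - |t - s|)| ≤ |(φ t - φ s) - (t - s)| := abs_abs_sub_abs_le _ _
      _ = |(φ t - t) - (φ s - s)| := by rw [sub_sub_sub_comm]
      _ ≤ |φ t - t| + |φ s - s| := abs_sub _ _
      _ ≤ 2 * M := by linarith [hM s hs, hM t ht]
  obtain ⟨hneg, hpos⟩ := abs_le.1 hclose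
  exact ⟨by simp only [Function.comp_apply]; linarith, by simp only [Function.comp_apply]; linarith⟩

lemma RoughGeodesicOn.comp_collapse (h : RoughGeodesicOn Ω C σ a b) (hs₁ : s₁ ∈ Icc a b)
    (hs₂ : s₂ ∈ Icc a b) (hM : kobDist Ω (σ s₁) (σ s₂) ≤ M) :
    RoughGeodesicOn Ω (C + 2 * (M + C)) (σ ∘ collapse s₁ s₂) a b := by
  refine h.comp_of_abs_sub_le (fun t ht => ?_) fun t _ => ?_
  · exact union_subset (Icc_subset_Icc_right hs₁.2) (Icc_subset_Icc_left hs₂.1)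
      (collapse_mem hs₁.1 ht)
  · exact (abs_collapse_sub_le s₁ s₂ t).trans (by linarith [(h.2 s₁ hs₁ s₂ hs₂).1])

end RoughGeodesics

theorem statement_6_general {E : Type*} [NormedAddCommGroup E] [NormedSpace ℂ E] [CompleteSpace E]
    {Ω U : Set E} (hΩo : IsOpen Ω) (hΩb : Bornology.IsBounded Ω) (hlog : LogTypeConvex (Ω ∩ U))
    {ξ : E} {κ : ℝ} (hκ : 0 ≤ κ) {ε : ℝ} (hε : 0 < ε) (hball : ball ξ ε ⊆ U) :
    ∃ δ : ℝ, 0 < δ ∧ ∃ C : ℝ, 0 < C ∧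
      ∀ p ∈ Ω ∩ ball ξ δ, ∀ q ∈ Ω ∩ ball ξ δ,
      ∀ (a b : ℝ) (σ g : ℝ → E), a ≤ b →
        AlmostGeodesicOn Ω 1 κ σ g a b → σ a = p → σ b = q →
        ∃ σ' : ℝ → E, RoughGeodesicOn Ω C σ' a b ∧ σ' a = p ∧ σ' b = q ∧
          σ' '' Icc a b ⊆ ball ξ ε := by
  obtain ⟨C₀, ν, hlog⟩ := hlog
  obtain ⟨hDo, hDne, -, hDc, -⟩ := id hlog
  have hloc : Ω ∩ ball ξ ε ⊆ Ω ∩ U := inter_subset_inter_right Ω hball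
  obtain ⟨A, B, hA, hB, hAB⟩ := exists_kobDist_le_sub_mul_log hΩb inter_subset_left hDo hDne hDc
  obtain ⟨c, hc, hdeep⟩ := hlog.exists_le_bdist_of_exits (ρ₀ := ε / 4) (ρ₁ := ε / 2) hΩo hΩb
    inter_subset_left (by linarith) (by linarith) hloc one_pos κ
  have hsub : closedBall ξ (ε / 2) ⊆ ball ξ ε := closedBall_subset_ball (by linarith)
  set M := A - B * Real.log c
  have hM : 0 ≤ M := by linarith [mul_nonneg hB (neg_nonneg.2 (Real.log_nonpos hc.1.le hc.2))]
  refine ⟨ε / 4, by linarith, κ + 2 * (M + κ) + 1, by linarith, ?_⟩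
  rintro _ ⟨-, hp⟩ _ ⟨-, hq⟩ a b σ g hab hσ rfl rfl
  by_cases hnear : MapsTo σ (Icc a b) (ball ξ (ε / 2))
  · exact ⟨σ, hσ.roughGeodesicOn.mono (by linarith), rfl, rfl,
      (hnear.mono_right (ball_subset_closedBall.trans hsub)).image_subset⟩
  obtain ⟨s₁, hs₁, s₂, hs₂, hc₁, hc₂, hmaps⟩ := hdeep hab hσ hp hq hnear
  have hball' : MapsTo σ (Icc a s₁ ∪ Icc s₂ b) (ball ξ ε) := hmaps.mono_right hsub
  have hD₁ : σ s₁ ∈ Ω ∩ U := hloc ⟨hσ.1 hs₁, hball' (Or.inl (right_mem_Icc.2 hs₁.1))⟩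
  have hD₂ : σ s₂ ∈ Ω ∩ U := hloc ⟨hσ.1 hs₂, hball' (Or.inr (left_mem_Icc.2 hs₂.2))⟩
  have hK : kobDist Ω (σ s₁) (σ s₂) ≤ M := hAB _ hD₁ _ hD₂ c hc hc₁ hc₂
  refine ⟨σ ∘ collapse s₁ s₂, (hσ.roughGeodesicOn.comp_collapse hs₁ hs₂ hK).mono (by linarith),
    congrArg σ (collapse_left hs₁.1), congrArg σ (collapse_right hs₂.2), ?_⟩
  exact (hball'.comp fun t ht => collapse_mem hs₁.1 ht).image_subset

theorem statement_6 {n : ℕ} (hn : 2 ≤ n)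
    (Ω U : Set (EuclideanSpace ℂ (Fin n)))
    (hΩo : IsOpen Ω) (hΩc : IsConnected Ω) (hΩb : Bornology.IsBounded Ω)
    (hUo : IsOpen U)
    (hlog : LogTypeConvex (Ω ∩ U))
    (ξ : EuclideanSpace ℂ (Fin n)) (hξ : ξ ∈ frontier Ω ∩ U)
    (κ : ℝ) (hκ : 0 ≤ κ)
    (ε : ℝ) (hε : 0 < ε) (hball : ball ξ ε ⊆ U) :
    ∃ δ : ℝ, 0 < δ ∧ ∃ C : ℝ, 0 < C ∧
      ∀ p ∈ Ω ∩ ball ξ δ, ∀ q ∈ Ω ∩ ball ξ δ,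
      ∀ (a b : ℝ) (σ g : ℝ → EuclideanSpace ℂ (Fin n)), a ≤ b →
        AlmostGeodesicOn Ω 1 κ σ g a b → σ a = p → σ b = q →
        ∃ σ' : ℝ → EuclideanSpace ℂ (Fin n), RoughGeodesicOn Ω C σ' a b ∧ σ' a = p ∧ σ' b = q ∧
          σ' '' Icc a b ⊆ ball ξ ε :=
  statement_6_general hΩo hΩb hlog hκ hε hball
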